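/- arXiv:2510.10901 — 9 statements merged into one kernel-verified Lean document; each statement's English description precedes it below -/
import Mathlib

section
/- Let S be a finite set of positive integers. For every positive integer n, the integer α_S(n) is odd if and only if n ∈ S. -/
/-- The key coefficient function `α_S : ℕ → ℤ` (supported on positive integers),
packaged as a finitely supported function:
`α_S(n) = ∑_{I ⊆ S, I ≠ ∅} (−1)^{|I|} 2^{|I|−1} [n = gcd(I)]`. -/
noncomputable def alphaF (S : Finset ℕ) : ℕ →₀ ℤ :=
  ∑ I ∈ S.powerset.filter (· ≠ ∅),
    Finsupp.single (I.gcd id) ((-1 : ℤ) ^ I.card * 2 ^ (I.card - 1))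

/-! Modulo 2 the weight `(-1) ^ |I| * 2 ^ (|I| - 1)` of a nonempty set `I` vanishes unless `I` is
a singleton, and `{s}` contributes to the coefficient at `gcd {s} = s`. Of the gcd, only its value
on singletons matters. -/

theorem odd_sum_iff_mem_of_odd_iff_eq {ι : Type*} {s : Finset ι} {f : ι → ℤ} {a : ι}
    (hf : ∀ i ∈ s, Odd (f i) ↔ i = a) : Odd (∑ i ∈ s, f i) ↔ a ∈ s := by
  classical
  have cast_eq : ∀ i ∈ s, (f i : ZMod 2) = if i = a then 1 else 0 := by
    intro i hi
    split_ifs with hia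
    · exact ((hf i hi).2 hia).intCast_zmod_two
    · exact (Int.not_odd_iff_even.1 (mt (hf i hi).1 hia)).intCast_zmod_two
  rw [← ZMod.intCast_eq_one_iff_odd, Int.cast_sum, Finset.sum_congr rfl cast_eq,
    Finset.sum_ite_eq']
  simp

/-- At `k = 0` the truncated exponent `k - 1` makes the product `1`. -/
theorem odd_neg_one_pow_mul_two_pow_pred_iff {k : ℕ} :
    Odd ((-1 : ℤ) ^ k * 2 ^ (k - 1)) ↔ k ≤ 1 := by
  have two_pow : Odd ((2 : ℤ) ^ (k - 1)) ↔ k - 1 = 0 := by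
    simp [← Int.not_even_iff_odd, Int.even_pow]
  rw [Int.odd_mul, two_pow, Nat.sub_eq_zero_iff_le]
  exact and_iff_right odd_neg_one.pow

theorem odd_single_apply_iff_eq_singleton {α : Type*} {g : Finset α → α} (hg : ∀ a, g {a} = a)
    {I : Finset α} (hI : I.Nonempty) {a : α} :
    Odd (Finsupp.single (g I) ((-1 : ℤ) ^ I.card * 2 ^ (I.card - 1)) a) ↔ I = {a} := by
  classical
  constructor
  · intro hodd
    rw [Finsupp.single_apply] at hodd
    split_ifs at hodd with hgI
    · have card_eq_one : I.card = 1 :=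
        le_antisymm (odd_neg_one_pow_mul_two_pow_pred_iff.1 hodd) hI.card_pos
      obtain ⟨b, rfl⟩ := Finset.card_eq_one.1 card_eq_one
      rw [← hgI, hg]
    · exact absurd hodd Int.not_odd_zero
  · rintro rfl
    rw [hg, Finsupp.single_eq_same, Finset.card_singleton]
    exact odd_neg_one_pow_mul_two_pow_pred_iff.2 le_rfl

theorem alpha_odd_iff_mem_general {α : Type*} [DecidableEq α] {g : Finset α → α}
    (hg : ∀ a, g {a} = a) (S : Finset α) (a : α) :
    Odd ((∑ I ∈ S.powerset.filter (· ≠ ∅),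
      Finsupp.single (g I) ((-1 : ℤ) ^ I.card * 2 ^ (I.card - 1))) a) ↔ a ∈ S := by
  have odd_term_iff : ∀ I ∈ S.powerset.filter (· ≠ ∅),
      Odd (Finsupp.single (g I) ((-1 : ℤ) ^ I.card * 2 ^ (I.card - 1)) a) ↔ I = {a} :=
    fun I hI ↦ odd_single_apply_iff_eq_singleton hg
      (Finset.nonempty_iff_ne_empty.2 (Finset.mem_filter.1 hI).2)
  rw [Finsupp.finsetSum_apply, odd_sum_iff_mem_of_odd_iff_eq odd_term_iff]
  simp

/-- For every positive integer `n`, the integer `α_S(n)` is odd iff `n ∈ S`. -/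
theorem alpha_odd_iff_mem (S : Finset ℕ) (hS : ∀ s ∈ S, 0 < s)
    (n : ℕ) (hn : 0 < n) : Odd (alphaF S n) ↔ n ∈ S :=
  alpha_odd_iff_mem_general (g := fun I ↦ I.gcd id)
    (fun _ ↦ Finset.gcd_singleton.trans (normalize_eq _)) S n
end

section
/- (Decryption correctness / key involution) Let S be a finite set of positive integers. For every finitely supported p : ℕ+ → ℤ, T_S(T_S p) = p; that is, the key operator T_S is an involution. -/
/-- The key operator `T_S` on finitely supported `p : ℕ →₀ ℤ`
(`p` represents the dihedral plaintext `∑_i p(i)(D_i)`):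
`(T_S p)(j) = p(j) + 2 ∑_{i ∈ supp p} ∑_{n ∈ supp α_S} p(i) α_S(n) [gcd(i,n) = j]`. -/
noncomputable def keyOp (S : Finset ℕ) (p : ℕ →₀ ℤ) : ℕ →₀ ℤ :=
  p + 2 • ∑ i ∈ p.support, ∑ n ∈ (alphaF S).support,
    Finsupp.single (Nat.gcd i n) (p i * alphaF S n)

/-!
Since `(D_i) (D_n) = 2 (D_{gcd(i, n)})`, the elements `e n = (D_n) / 2` are commuting idempotents
with `e i * e n = e (gcd i n)`. The key `k_S` is the product of the factors `1 - 2 e s`, each of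
which squares to `1`. Expanding this product over subsets of `S` gives
`k_S = 1 + 2 ∑ n, α_S n • e n`, so `T_S` is multiplication by an element of square `1`.
-/

section IdempotentProducts

lemma one_sub_two_mul_sq_of_isIdempotentElem {R : Type*} [Ring R] {e : R}
    (he : IsIdempotentElem e) : (1 - 2 * e) ^ 2 = 1 := by
  calc (1 - 2 * e) ^ 2 = 1 + 4 * (e * e - e) := by noncomm_ring
    _ = 1 := by rw [he.eq, sub_self, mul_zero, add_zero]

variable {ι R : Type*} [CommRing R]

lemma prod_one_sub_two_mul_sq {s : Finset ι} {e : ι → R}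
    (he : ∀ i ∈ s, IsIdempotentElem (e i)) : (∏ i ∈ s, (1 - 2 * e i)) ^ 2 = 1 := by
  rw [← Finset.prod_pow]
  exact Finset.prod_eq_one fun i hi ↦ one_sub_two_mul_sq_of_isIdempotentElem (he i hi)

lemma prod_neg_two_mul {I : Finset ι} (hI : I.Nonempty) (e : ι → R) :
    ∏ i ∈ I, -2 * e i = 2 * (((-1) ^ I.card * 2 ^ (I.card - 1)) * ∏ i ∈ I, e i) := by
  have two_pow_card : (2 : R) ^ I.card = 2 * 2 ^ (I.card - 1) :=
    (mul_pow_sub_one hI.card_ne_zero 2).symm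
  rw [Finset.prod_mul_distrib, Finset.prod_const, neg_pow, two_pow_card]
  ring

lemma prod_one_sub_two_mul [DecidableEq ι] (s : Finset ι) (e : ι → R) :
    ∏ i ∈ s, (1 - 2 * e i) =
      1 + 2 * ∑ I ∈ s.powerset.filter (· ≠ ∅),
        ((-1) ^ I.card * 2 ^ (I.card - 1)) * ∏ i ∈ I, e i := by
  calc ∏ i ∈ s, (1 - 2 * e i)
      = ∏ i ∈ s, (1 + -2 * e i) := by simp only [neg_mul, sub_eq_add_neg]
    _ = ∑ I ∈ s.powerset, ∏ i ∈ I, -2 * e i := Finset.prod_one_add s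
    _ = 1 + ∑ I ∈ s.powerset.filter (· ≠ ∅), ∏ i ∈ I, -2 * e i := by
      rw [Finset.filter_ne', ← Finset.add_sum_erase _ _ (Finset.empty_mem_powerset s),
        Finset.prod_empty]
    _ = _ := by
      rw [Finset.mul_sum]
      refine congrArg (1 + ·) (Finset.sum_congr rfl fun I hI ↦ ?_)
      exact prod_neg_two_mul (Finset.nonempty_iff_ne_empty.mpr (Finset.mem_filter.mp hI).2) e

end IdempotentProducts

/-- The natural numbers as a monoid under `gcd`: the index set of the dihedral classes `(D_n)`,
together with the identity element `0`, which is the index of `(O(2))`. -/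
@[ext]
structure GcdNat where
  /-- The underlying natural number. -/
  toNat : ℕ

namespace GcdNat

/-- The bijection between `ℕ` and `GcdNat`. -/
def natEquiv : ℕ ≃ GcdNat where
  toFun := mk
  invFun := toNat

instance : CommMonoid GcdNat where
  mul a b := ⟨a.toNat.gcd b.toNat⟩
  one := ⟨0⟩
  mul_assoc _ _ _ := GcdNat.ext (Nat.gcd_assoc _ _ _)
  mul_comm _ _ := GcdNat.ext (Nat.gcd_comm _ _)
  one_mul _ := GcdNat.ext (Nat.gcd_zero_left _)
  mul_one _ := GcdNat.ext (Nat.gcd_zero_right _)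

lemma mk_mul_mk (i n : ℕ) : mk i * mk n = mk (i.gcd n) := rfl

lemma mk_zero : mk 0 = 1 := rfl

end GcdNat

/-- The extension of the subring of `A(O(2))` spanned by `(O(2))` and the `(D_n)`, `n > 0`, in
which `(D_n)` becomes divisible by `2`: its basis `(O(2))`, `(D_n) / 2` is indexed by `GcdNat`. -/
abbrev DihedralRing : Type := MonoidAlgebra ℤ GcdNat

namespace DihedralRing

open GcdNat

/-- The idempotent `(D_n) / 2` for `n > 0`, and `(O(2)) = 1` for `n = 0`. -/
noncomputable def idem (n : ℕ) : DihedralRing := MonoidAlgebra.of ℤ GcdNat (mk n)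

lemma idem_zero : idem 0 = 1 := by rw [idem, mk_zero, map_one]

lemma idem_mul_idem (i n : ℕ) : idem i * idem n = idem (i.gcd n) := by
  rw [idem, idem, ← map_mul, mk_mul_mk, idem]

lemma isIdempotentElem_idem (n : ℕ) : IsIdempotentElem (idem n) := by
  rw [IsIdempotentElem, idem_mul_idem, Nat.gcd_self]

lemma prod_idem (I : Finset ℕ) : ∏ i ∈ I, idem i = idem (I.gcd id) := by
  induction I using Finset.induction_on with
  | empty => rw [Finset.prod_empty, Finset.gcd_empty, idem_zero]
  | insert a I ha ih =>
    rw [Finset.prod_insert ha, ih, idem_mul_idem, Finset.gcd_insert, id, gcd_eq_nat_gcd]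

/-- The element of `DihedralRing` with coefficients `p` in the basis `idem`. For a plaintext `p`
this is half of `∑ i, p i • (D_i)`; the factor is harmless because multiplication by the key is
linear. -/
noncomputable def ofCoeffs : (ℕ →₀ ℤ) ≃+ DihedralRing :=
  (Finsupp.domCongr natEquiv).trans MonoidAlgebra.coeffAddEquiv.symm

lemma ofCoeffs_single (n : ℕ) (c : ℤ) : ofCoeffs (Finsupp.single n c) = c * idem n := by
  have ofCoeffs_single_eq : ofCoeffs (Finsupp.single n c) = MonoidAlgebra.single (mk n) c :=
    congrArg MonoidAlgebra.ofCoeff (Finsupp.equivMapDomain_single natEquiv n c)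
  rw [ofCoeffs_single_eq, idem, ← zsmul_eq_mul, MonoidAlgebra.of_apply, MonoidAlgebra.smul_single,
    smul_eq_mul, mul_one]

lemma ofCoeffs_eq_sum (p : ℕ →₀ ℤ) : ofCoeffs p = ∑ n ∈ p.support, p n * idem n := by
  conv_lhs => rw [← p.sum_single, Finsupp.sum, map_sum]
  simp only [ofCoeffs_single]

/-- The key element `k_S = ∏ s ∈ S, ((O(2)) - (D_s))`. -/
noncomputable def key (S : Finset ℕ) : DihedralRing := ∏ s ∈ S, (1 - 2 * idem s)

lemma key_sq (S : Finset ℕ) : key S ^ 2 = 1 :=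
  prod_one_sub_two_mul_sq fun s _ ↦ isIdempotentElem_idem s

lemma key_eq_one_add_two_mul_ofCoeffs_alphaF (S : Finset ℕ) :
    key S = 1 + 2 * ofCoeffs (alphaF S) := by
  simp only [key, prod_one_sub_two_mul, prod_idem, alphaF, map_sum, ofCoeffs_single,
    Int.cast_mul, Int.cast_pow, Int.cast_neg, Int.cast_one, Int.cast_ofNat]

lemma ofCoeffs_mul_ofCoeffs (p q : ℕ →₀ ℤ) :
    ofCoeffs p * ofCoeffs q =
      ofCoeffs (∑ i ∈ p.support, ∑ n ∈ q.support, Finsupp.single (i.gcd n) (p i * q n)) := by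
  simp only [map_sum, ofCoeffs_single, Int.cast_mul, ← idem_mul_idem, ofCoeffs_eq_sum p,
    ofCoeffs_eq_sum q, Finset.sum_mul_sum, mul_mul_mul_comm]

lemma ofCoeffs_keyOp (S : Finset ℕ) (p : ℕ →₀ ℤ) :
    ofCoeffs (keyOp S p) = ofCoeffs p * key S := by
  rw [keyOp, map_add, map_nsmul, ← ofCoeffs_mul_ofCoeffs, key_eq_one_add_two_mul_ofCoeffs_alphaF,
    nsmul_eq_mul, Nat.cast_ofNat]
  ring

end DihedralRing

/-- (Decryption correctness / key involution) The key operator `T_S` is an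
involution on finitely supported plaintexts. -/
theorem key_involution (S : Finset ℕ) (hS : ∀ s ∈ S, 0 < s)
    (p : ℕ →₀ ℤ) (hp : ∀ i ∈ p.support, 0 < i) :
    keyOp S (keyOp S p) = p := by
  apply DihedralRing.ofCoeffs.injective
  rw [DihedralRing.ofCoeffs_keyOp, DihedralRing.ofCoeffs_keyOp, mul_assoc, ← sq,
    DihedralRing.key_sq, mul_one]
end

section
/- For every positive integer m and every finitely supported p : ℕ+ → ℤ, T^{(m)}(T^{(m)} p) = p; that is, each basic-degree operator is an involution. -/
/-- The basic-degree operator `T^{(m)}`: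
`(T^{(m)} p)(j) = p(j) − 2 ∑_{i ∈ supp p} p(i) [gcd(i,m) = j]`. -/
noncomputable def basicOp (m : ℕ) (p : ℕ →₀ ℤ) : ℕ →₀ ℤ :=
  p - 2 • ∑ i ∈ p.support, Finsupp.single (Nat.gcd i m) (p i)

/-!
The map `i ↦ gcd(i, m)` is idempotent, hence so is the operator `E` that pushes coefficients forward
along it, and `1 - 2E` is its own inverse for every idempotent `E`: `(1 - 2E)² = 1 - 4E + 4E² = 1`.
-/

theorem involutive_sub_two_nsmul_of_idempotent {A : Type*} [AddCommGroup A] {E : A →+ A}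
    (hE : ∀ a, E (E a) = E a) : Function.Involutive fun a => a - 2 • E a := by
  intro a
  have map_reflection : E (a - 2 • E a) = -E a := by
    rw [map_sub, map_nsmul, hE]
    abel
  simp only [map_reflection]
  abel

theorem mapDomain_mapDomain_of_idempotent {α M : Type*} [AddCommMonoid M] {f : α → α}
    (hf : ∀ a, f (f a) = f a) (p : α →₀ M) :
    Finsupp.mapDomain f (Finsupp.mapDomain f p) = Finsupp.mapDomain f p := by
  rw [← Finsupp.mapDomain_comp, show f ∘ f = f from funext hf]

theorem basic_degree_involution_general {α M : Type*} [AddCommGroup M] {f : α → α}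
    (hf : ∀ a, f (f a) = f a) :
    Function.Involutive fun p : α →₀ M => p - 2 • Finsupp.mapDomain f p :=
  involutive_sub_two_nsmul_of_idempotent (E := Finsupp.mapDomain.addMonoidHom (M := M) f)
    (mapDomain_mapDomain_of_idempotent hf)

theorem basicOp_eq_sub_two_nsmul_mapDomain (m : ℕ) (p : ℕ →₀ ℤ) :
    basicOp m p = p - 2 • Finsupp.mapDomain (Nat.gcd · m) p :=
  rfl

/-- Each basic-degree operator `T^{(m)}` is an involution. -/
theorem basic_degree_involution (m : ℕ) (hm : 0 < m)
    (p : ℕ →₀ ℤ) (hp : ∀ i ∈ p.support, 0 < i) :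
    basicOp m (basicOp m p) = p := by
  simp only [basicOp_eq_sub_two_nsmul_mapDomain]
  exact basic_degree_involution_general (fun i => Nat.gcd_gcd_self_left_right m i) p
end

section
/- For all positive integers m and k and every finitely supported p : ℕ+ → ℤ, T^{(m)}(T^{(k)} p) = T^{(k)}(T^{(m)} p); that is, the basic-degree operators commute. -/
/-!
`T^{(m)}` is `1 - 2 G_m` in the endomorphism ring of the finitely supported functions, where `G_m`
is the pushforward along `i ↦ gcd(i, m)`. The maps `i ↦ gcd(i, m)` and `i ↦ gcd(i, k)` commute,
hence so do `G_m` and `G_k`, and with them `1 - 2 G_m` and `1 - 2 G_k`.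
-/

open Finsupp

theorem commute_lmapDomain {α M R : Type*} [Semiring R] [AddCommMonoid M] [Module R M]
    {f g : α → α} (h : Function.Commute f g) :
    Commute (lmapDomain M R f) (lmapDomain M R g) :=
  calc lmapDomain M R f * lmapDomain M R g
    _ = lmapDomain M R (f ∘ g) := (lmapDomain_comp M R g f).symm
    _ = lmapDomain M R (g ∘ f) := by rw [h.comp_eq]
    _ = lmapDomain M R g * lmapDomain M R f := lmapDomain_comp M R f g

theorem commute_one_sub_nsmul {R : Type*} [Ring R] {a b : R} (h : Commute a b) (r s : ℕ) :
    Commute (1 - r • a) (1 - s • b) :=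
  have h_smul : Commute (r • a) (s • b) := (h.smul_left r).smul_right s
  .sub_left (.one_left _) (.sub_right (.one_right _) h_smul)

theorem basicOp_eq_one_sub_lmapDomain_gcd (m : ℕ) :
    basicOp m = ⇑(1 - 2 • lmapDomain ℤ ℤ (Nat.gcd · m) : Module.End ℤ (ℕ →₀ ℤ)) :=
  rfl

/-- The basic-degree operators commute. -/
theorem basic_degree_operators_commute (m k : ℕ) (hm : 0 < m) (hk : 0 < k)
    (p : ℕ →₀ ℤ) (hp : ∀ i ∈ p.support, 0 < i) :
    basicOp m (basicOp k p) = basicOp k (basicOp m p) := by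
  have gcd_commute : Function.Commute (Nat.gcd · m) (Nat.gcd · k) :=
    fun i => Nat.gcd_right_comm i k m
  have operators_commute :
      Commute (1 - 2 • lmapDomain ℤ ℤ (Nat.gcd · m)) (1 - 2 • lmapDomain ℤ ℤ (Nat.gcd · k)) :=
    commute_one_sub_nsmul (commute_lmapDomain gcd_commute) 2 2
  simpa only [basicOp_eq_one_sub_lmapDomain_gcd, Module.End.mul_apply]
    using LinearMap.congr_fun operators_commute.eq p
end

section
/- Let S be a finite set of positive integers and let s be a positive integer with s ∉ S. Then for every finitely supported p : ℕ+ → ℤ, T_{S ∪ {s}} p = T^{(s)}(T_S p); that is, the key operator for S ∪ {s} factors as the composition of the basic-degree operator T^{(s)} with the key operator for S. -/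
/-!
Let `G m` be the pushforward along `i ↦ gcd i m`. Then `G m * G n = G (gcd m n)`, and `0 = gcd ∅`
gives `G 0 = 1`. The coefficients of `α_S` are such that
`T_S = 1 + 2 ∑ α_S(n) G n = ∑_{I ⊆ S} (-2)^|I| G (gcd I)`, the expansion over subsets of the product
of the `1 - 2 G s`. Splitting the subsets of `S ∪ {s}` according to whether they contain `s` pulls
out the factor `1 - 2 G s = T^{(s)}`.
-/

section GcdEnd

/-- The operator on finitely supported functions moving the coefficient at `i` to `gcd i m`. It is
half of Burnside-ring multiplication by `(D_m)`, since `(D_i) (D_m) = 2 (D_{gcd i m})`. -/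
noncomputable def gcdEnd (R : Type*) [Semiring R] (m : ℕ) : Module.End R (ℕ →₀ R) :=
  Finsupp.lmapDomain R R (Nat.gcd · m)

theorem gcdEnd_apply {R : Type*} [Semiring R] (m : ℕ) (p : ℕ →₀ R) :
    gcdEnd R m p = ∑ i ∈ p.support, Finsupp.single (i.gcd m) (p i) :=
  rfl

theorem gcdEnd_zero (R : Type*) [Semiring R] : gcdEnd R 0 = 1 := by
  simp only [gcdEnd, Nat.gcd_zero_right]
  exact Finsupp.lmapDomain_id R R

theorem gcdEnd_mul_gcdEnd (R : Type*) [Semiring R] (m n : ℕ) :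
    gcdEnd R m * gcdEnd R n = gcdEnd R (m.gcd n) := by
  have gcd_comp : (Nat.gcd · m) ∘ (Nat.gcd · n) = (Nat.gcd · (m.gcd n)) := by
    funext i
    rw [Function.comp_apply, Nat.gcd_assoc, Nat.gcd_comm n]
  rw [Module.End.mul_eq_comp, gcdEnd, gcdEnd, ← Finsupp.lmapDomain_comp, gcd_comp, gcdEnd]

theorem sum_powerset_insert_smul_gcdEnd {R : Type*} [CommSemiring R] {s : ℕ} {S : Finset ℕ}
    (hs : s ∉ S) (c : R) :
    ∑ I ∈ (insert s S).powerset, c ^ I.card • gcdEnd R (I.gcd id) =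
      (1 + c • gcdEnd R s) * ∑ I ∈ S.powerset, c ^ I.card • gcdEnd R (I.gcd id) := by
  have term_insert (I : Finset ℕ) (hI : I ∈ S.powerset) :
      c ^ (insert s I).card • gcdEnd R ((insert s I).gcd id) =
        c • gcdEnd R s * (c ^ I.card • gcdEnd R (I.gcd id)) := by
    have hsI : s ∉ I := fun h => hs (Finset.mem_powerset.mp hI h)
    rw [Finset.card_insert_of_notMem hsI, Finset.gcd_insert, smul_mul_smul_comm,
      gcdEnd_mul_gcdEnd, pow_succ', id, gcd_eq_nat_gcd]
  rw [Finset.sum_powerset_insert hs, Finset.sum_congr rfl term_insert, ← Finset.mul_sum,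
    add_mul, one_mul]

end GcdEnd

theorem single_zero_add_two_smul_alphaF (S : Finset ℕ) :
    Finsupp.single 0 1 + 2 • alphaF S =
      ∑ I ∈ S.powerset, Finsupp.single (I.gcd id) ((-2 : ℤ) ^ I.card) := by
  have two_mul_coeff (k : ℕ) (hk : k ≠ 0) : 2 * ((-1 : ℤ) ^ k * 2 ^ (k - 1)) = (-2) ^ k := by
    rw [mul_left_comm, mul_pow_sub_one hk, ← mul_pow, neg_one_mul]
  rw [← Finset.add_sum_erase _ _ (Finset.empty_mem_powerset S), alphaF,
    Finset.filter_ne', Finset.smul_sum]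
  refine congrArg₂ _ (by simp) (Finset.sum_congr rfl fun I hI => ?_)
  have hI0 : I.card ≠ 0 := Finset.card_ne_zero.mpr
    (Finset.nonempty_iff_ne_empty.mpr (Finset.ne_of_mem_erase hI))
  rw [Finsupp.smul_single, nsmul_eq_mul, Nat.cast_ofNat, two_mul_coeff _ hI0]

theorem basicOp_eq_gcdEnd (m : ℕ) (p : ℕ →₀ ℤ) :
    basicOp m p = (1 + (-2 : ℤ) • gcdEnd ℤ m) p := by
  rw [basicOp, ← gcdEnd_apply, LinearMap.add_apply, LinearMap.smul_apply, Module.End.one_apply,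
    neg_smul, ← sub_eq_add_neg, ofNat_zsmul]

theorem keyOp_eq_linearCombination (S : Finset ℕ) (p : ℕ →₀ ℤ) :
    keyOp S p =
      Finsupp.linearCombination ℤ (gcdEnd ℤ) (Finsupp.single 0 1 + 2 • alphaF S) p := by
  have inner_sum : ∑ i ∈ p.support, ∑ n ∈ (alphaF S).support,
      Finsupp.single (i.gcd n) (p i * alphaF S n) =
        Finsupp.linearCombination ℤ (gcdEnd ℤ) (alphaF S) p := by
    rw [Finset.sum_comm, Finsupp.linearCombination_apply, Finsupp.sum, LinearMap.sum_apply]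
    simp only [LinearMap.smul_apply, gcdEnd_apply, Finset.smul_sum, Finsupp.smul_single,
      smul_eq_mul, mul_comm]
  rw [keyOp, inner_sum, map_add, map_nsmul, Finsupp.linearCombination_single, one_smul,
    gcdEnd_zero, LinearMap.add_apply, LinearMap.smul_apply, Module.End.one_apply]

theorem keyOp_eq_sum_powerset (S : Finset ℕ) (p : ℕ →₀ ℤ) :
    keyOp S p = (∑ I ∈ S.powerset, (-2 : ℤ) ^ I.card • gcdEnd ℤ (I.gcd id)) p := by
  simp only [keyOp_eq_linearCombination, single_zero_add_two_smul_alphaF, map_sum,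
    Finsupp.linearCombination_single]

/-- The key operator for `S ∪ {s}` (with `s ∉ S`) factors as the composition of
the basic-degree operator `T^{(s)}` with the key operator for `S`. -/
theorem key_operator_factorization (S : Finset ℕ) (hS : ∀ s ∈ S, 0 < s)
    (s : ℕ) (hs : 0 < s) (hsS : s ∉ S)
    (p : ℕ →₀ ℤ) (hp : ∀ i ∈ p.support, 0 < i) :
    keyOp (insert s S) p = basicOp s (keyOp S p) := by
  rw [keyOp_eq_sum_powerset, keyOp_eq_sum_powerset, basicOp_eq_gcdEnd,
    sum_powerset_insert_smul_gcdEnd hsS, Module.End.mul_apply]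
end

section
/- Let S be a finite set of positive integers and q a positive integer. Then for every positive integer n, α_{qS}(qn) = α_S(n), and α_{qS}(m) = 0 for every positive integer m not divisible by q, where qS = {q·s : s ∈ S}. -/
theorem gcd_image_of_map_gcd {α β : Type*} [CommMonoidWithZero α] [NormalizedGCDMonoid α]
    [CommMonoidWithZero β] [NormalizedGCDMonoid β] [DecidableEq β] {f : α → β}
    (hf : ∀ a b, f (gcd a b) = gcd (f a) (f b)) {s : Finset α} (hs : s.Nonempty) :
    (s.image f).gcd id = f (s.gcd id) := by
  rw [Finset.gcd_image, Function.id_comp]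
  induction hs using Finset.Nonempty.cons_induction with
  | singleton a => simpa only [Finset.gcd_singleton, gcd_same, id] using (hf a a).symm
  | cons a s ha _ ih => rw [Finset.gcd_cons, Finset.gcd_cons, ih, id, hf]

/-- `I ↦ f(I)` is a cardinality-preserving bijection from the nonempty subsets of `S` to those of
`f(S)`, under which the gcd is transported by `f`. -/
theorem alphaF_image_of_map_gcd {f : ℕ → ℕ} (hgcd : ∀ a b, f (gcd a b) = gcd (f a) (f b))
    {S : Finset ℕ} (hf : Set.InjOn f S) : alphaF (S.image f) = (alphaF S).mapDomain f := by
  have himage : Set.InjOn (Finset.image f) (S.powerset.filter (· ≠ ∅)) :=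
    (Finset.image_injOn_powerset_of_injOn hf).mono (Finset.filter_subset _ _)
  simp only [alphaF, Finset.powerset_image, Finset.filter_image, ne_eq, Finset.image_eq_empty,
    Finsupp.mapDomain_finsetSum, Finsupp.mapDomain_single]
  rw [Finset.sum_image himage]
  refine Finset.sum_congr rfl fun I hI => ?_
  obtain ⟨hIS, hne⟩ := Finset.mem_filter.mp hI
  have hcard : (I.image f).card = I.card :=
    Finset.card_image_of_injOn (hf.mono (Finset.mem_powerset.mp hIS))
  rw [gcd_image_of_map_gcd hgcd (Finset.nonempty_iff_ne_empty.mpr hne), hcard]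

theorem alphaF_image_mul_left {q : ℕ} (hq : q ≠ 0) (S : Finset ℕ) :
    alphaF (S.image (q * ·)) = (alphaF S).mapDomain (q * ·) :=
  alphaF_image_of_map_gcd (fun a b => (Nat.gcd_mul_left q a b).symm)
    (mul_right_injective₀ hq).injOn

/-- For `qS = {q·s : s ∈ S}`: `α_{qS}(qn) = α_S(n)` for every positive `n`, and
`α_{qS}(m) = 0` for every positive `m` not divisible by `q`. -/
theorem alpha_scaling (S : Finset ℕ) (hS : ∀ s ∈ S, 0 < s) (q : ℕ) (hq : 0 < q) :
    (∀ n : ℕ, 0 < n → alphaF (S.image (fun s => q * s)) (q * n) = alphaF S n) ∧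
    (∀ m : ℕ, 0 < m → ¬ q ∣ m → alphaF (S.image (fun s => q * s)) m = 0) := by
  rw [alphaF_image_mul_left hq.ne']
  refine ⟨fun n _ => Finsupp.mapDomain_apply (mul_right_injective₀ hq.ne') (alphaF S) n,
    fun m _ hm => Finsupp.mapDomain_of_notMem_range (alphaF S) m ?_⟩
  rintro ⟨n, rfl⟩
  exact hm (dvd_mul_right q n)
end

section
/- (Infinite Non-Identifiability from Finite Data) Let S be a nonempty finite set of positive integers and L a positive integer. Then the collection of finite sets S' of positive integers satisfying T_{S'} p = T_S p for all finitely supported p : ℕ+ → ℤ with supp(p) ⊆ {1, …, L} is infinite; in particular, there exist infinitely many distinct key sets inducing the same linear transformation as k_S on W_L = ℤ[{(D_1), …, (D_L)}]. -/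
theorem gcd_finsetGcd_congr {ι α : Type*} [CommMonoidWithZero α] [NormalizedGCDMonoid α]
    {I : Finset ι} {f g : ι → α} {a : α} (h : ∀ s ∈ I, gcd a (f s) = gcd a (g s)) :
    gcd a (I.gcd f) = gcd a (I.gcd g) := by
  classical
  induction I using Finset.induction_on with
  | empty => simp only [Finset.gcd_empty]
  | insert s I _ ih =>
    rw [Finset.forall_mem_insert] at h
    calc gcd a ((insert s I).gcd f)
        = gcd (gcd a (f s)) (I.gcd f) := by rw [Finset.gcd_insert, gcd_assoc]
      _ = gcd (g s) (gcd a (I.gcd f)) := by rw [h.1, gcd_comm a, gcd_assoc]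
      _ = gcd (gcd a (g s)) (I.gcd g) := by rw [ih h.2, ← gcd_assoc, gcd_comm a]
      _ = gcd a ((insert s I).gcd g) := by rw [Finset.gcd_insert, gcd_assoc]

theorem image_add_right_injective {M : Type*} [AddCancelCommMonoid M] [IsAddTorsionFree M]
    [DecidableEq M] {S : Finset M} (hS : S.Nonempty) :
    Function.Injective fun c : M => S.image (· + c) := by
  intro c d hcd
  have sum_translate (e : M) : ∑ x ∈ S.image (· + e), x = ∑ x ∈ S, x + S.card • e := by
    rw [Finset.sum_image (add_left_injective e).injOn, Finset.sum_add_distrib, Finset.sum_const]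
  have hsum : ∑ x ∈ S, x + S.card • c = ∑ x ∈ S, x + S.card • d := by
    rw [← sum_translate, ← sum_translate]
    exact congrArg (fun T : Finset M => ∑ x ∈ T, x) hcd
  exact nsmul_right_injective hS.card_ne_zero (add_left_cancel hsum)

theorem alphaF_image {S : Finset ℕ} {f : ℕ → ℕ} (hf : Set.InjOn f S) :
    alphaF (S.image f) = ∑ I ∈ S.powerset.filter (· ≠ ∅),
      Finsupp.single (I.gcd f) ((-1 : ℤ) ^ I.card * 2 ^ (I.card - 1)) := by
  have hpowerset : (S.image f).powerset.filter (· ≠ ∅) =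
      (S.powerset.filter (· ≠ ∅)).image (·.image f) := by
    simp only [Finset.powerset_image, Finset.filter_image, ne_eq, Finset.image_eq_empty]
  have hinj : Set.InjOn (fun I : Finset ℕ => I.image f) (S.powerset.filter (· ≠ ∅)) :=
    (Finset.image_injOn_powerset_of_injOn hf).mono (Finset.filter_subset _ _)
  rw [alphaF, hpowerset, Finset.sum_image hinj]
  refine Finset.sum_congr rfl fun I hI => ?_
  have hIS : I ⊆ S := Finset.mem_powerset.1 (Finset.mem_of_mem_filter I hI)
  rw [Finset.gcd_image, Function.id_comp, Finset.card_image_of_injOn (hf.mono hIS)]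

theorem mapDomain_gcd_alphaF_image {S : Finset ℕ} {f : ℕ → ℕ} (hf : Set.InjOn f S) {i : ℕ}
    (hgcd : ∀ s ∈ S, i.gcd (f s) = i.gcd s) :
    (alphaF (S.image f)).mapDomain i.gcd = (alphaF S).mapDomain i.gcd := by
  rw [alphaF_image hf, alphaF, Finsupp.mapDomain_finsetSum, Finsupp.mapDomain_finsetSum]
  refine Finset.sum_congr rfl fun I hI => ?_
  have hIS : I ⊆ S := Finset.mem_powerset.1 (Finset.mem_of_mem_filter I hI)
  have hgcdI : i.gcd (I.gcd f) = i.gcd (I.gcd id) :=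
    gcd_finsetGcd_congr fun s hs => hgcd s (hIS hs)
  rw [Finsupp.mapDomain_single, Finsupp.mapDomain_single, hgcdI]

theorem keyOp_eq_add_sum_smul_mapDomain (S : Finset ℕ) (p : ℕ →₀ ℤ) :
    keyOp S p = p + 2 • p.sum fun i a => a • (alphaF S).mapDomain i.gcd := by
  simp only [keyOp, Finsupp.sum, Finsupp.mapDomain, Finset.smul_sum, Finsupp.smul_single,
    smul_eq_mul]

theorem keyOp_image {S : Finset ℕ} {f : ℕ → ℕ} (hf : Set.InjOn f S) {p : ℕ →₀ ℤ}
    (hgcd : ∀ i ∈ p.support, ∀ s ∈ S, i.gcd (f s) = i.gcd s) :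
    keyOp (S.image f) p = keyOp S p := by
  rw [keyOp_eq_add_sum_smul_mapDomain, keyOp_eq_add_sum_smul_mapDomain]
  congr 2
  exact Finsupp.sum_congr fun i hi => by rw [mapDomain_gcd_alphaF_image hf (hgcd i hi)]

theorem keyOp_image_add_right (S : Finset ℕ) {c : ℕ} {p : ℕ →₀ ℤ} (hc : ∀ i ∈ p.support, i ∣ c) :
    keyOp (S.image (· + c)) p = keyOp S p := by
  refine keyOp_image (add_left_injective c).injOn fun i hi s _ => ?_
  obtain ⟨k, rfl⟩ := hc i hi
  exact Nat.gcd_add_mul_left_right i s k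

/-- (Infinite Non-Identifiability from Finite Data) The collection of finite
sets `S'` of positive integers whose key operator agrees with that of `S` on
all plaintexts supported in `{1, …, L}` is infinite. -/
theorem infinite_non_identifiability (S : Finset ℕ) (hS : ∀ s ∈ S, 0 < s)
    (hSne : S.Nonempty) (L : ℕ) (hL : 0 < L) :
    {S' : Finset ℕ | (∀ s ∈ S', 0 < s) ∧
      ∀ p : ℕ →₀ ℤ, p.support ⊆ Finset.Icc 1 L → keyOp S' p = keyOp S p}.Infinite := by
  have translation_injective : Function.Injective fun k : ℕ => S.image (· + k * L.factorial) :=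
    (image_add_right_injective hSne).comp (mul_left_injective₀ L.factorial_ne_zero)
  refine Set.infinite_of_injective_forall_mem translation_injective fun k => ⟨?_, fun p hp => ?_⟩
  · exact Finset.forall_mem_image.2 fun s hs => Nat.add_pos_left (hS s hs) _
  · refine keyOp_image_add_right S fun i hi => ?_
    obtain ⟨hi_pos, hi_le⟩ := Finset.mem_Icc.1 (hp hi)
    exact (Nat.dvd_factorial hi_pos hi_le).mul_left k
end

section
/- Let S₀ and S₁ be finite sets of positive integers with S₀ ≠ S₁, and let x* be the largest element of the symmetric difference S₀ △ S₁. Then β_{S₀}(x*) − β_{S₁}(x*) is odd; in particular β_{S₀}(x*) ≠ β_{S₁}(x*). -/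
/-- `β_S(x) = ∑_{n ∈ supp α_S, x ∣ n} α_S(n)`. -/
noncomputable def beta (S : Finset ℕ) (x : ℕ) : ℤ :=
  ∑ n ∈ (alphaF S).support.filter (x ∣ ·), alphaF S n

/-!
By linearity, `β_S(x)` is the sum of `(-1)^|I| 2^(|I|-1)` over the nonempty subsets `I` of the set
`T` of multiples of `x` in `S`. Up to the empty subset, twice this sum is the binomial expansion of
`(1 - 2)^|T|`, so `β_S(x)` is `0` or `-1` according to whether `|T|` is even or odd. Hence
`β_{S₀}(x) - β_{S₁}(x)` has the parity of the number of multiples of `x` in `S₀ ∆ S₁`, and the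
largest element of a set of positive integers has no other multiple in that set.
-/

section BetaParity

open Finset
open scoped symmDiff

theorem two_mul_sum_nonempty_subsets_add_one {α R : Type*} [CommRing R] [DecidableEq α]
    (T : Finset α) :
    2 * ∑ I ∈ T.powerset with I ≠ ∅, (-1 : R) ^ #I * 2 ^ (#I - 1) + 1 = (-1) ^ #T := by
  have double_weight : ∀ I ∈ T.powerset.erase ∅,
      2 * ((-1 : R) ^ #I * 2 ^ (#I - 1)) = (-2) ^ #I := fun I hI ↦ by
    have hcard : #I ≠ 0 := card_ne_zero.2 (nonempty_iff_ne_empty.2 (ne_of_mem_erase hI))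
    rw [mul_left_comm, mul_pow_sub_one hcard, ← mul_pow, neg_one_mul]
  calc 2 * ∑ I ∈ T.powerset with I ≠ ∅, (-1 : R) ^ #I * 2 ^ (#I - 1) + 1
      = ∑ I ∈ T.powerset.erase ∅, (-2 : R) ^ #I + (-2) ^ #(∅ : Finset α) := by
        rw [filter_ne', mul_sum, sum_congr rfl double_weight, card_empty, pow_zero]
    _ = ∑ I ∈ T.powerset, (-2 : R) ^ #I := sum_erase_add _ _ (empty_mem_powerset T)
    _ = (-2 + 1) ^ #T := by simpa using sum_pow_mul_eq_add_pow (-2 : R) 1 T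
    _ = (-1) ^ #T := by norm_num

theorem beta_eq_sum_subsets_multiples (S : Finset ℕ) (x : ℕ) :
    beta S x = ∑ I ∈ {n ∈ S | x ∣ n}.powerset with I ≠ ∅, (-1) ^ #I * 2 ^ (#I - 1) := by
  have subsets_multiples : {I ∈ {I ∈ S.powerset | I ≠ ∅} | x ∣ I.gcd id} =
      {I ∈ {n ∈ S | x ∣ n}.powerset | I ≠ ∅} := by
    ext I
    simp only [mem_filter, mem_powerset, Finset.dvd_gcd_iff, id, subset_iff]
    grind
  calc beta S x
      = (alphaF S).sum fun n a ↦ if x ∣ n then a else 0 := sum_filter _ _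
    _ = ∑ I ∈ S.powerset with I ≠ ∅,
          if x ∣ I.gcd id then (-1) ^ #I * 2 ^ (#I - 1) else 0 := by
        rw [alphaF, ← Finsupp.sum_finsetSum_index (by simp) (by intros; split_ifs <;> simp)]
        exact sum_congr rfl fun I _ ↦ Finsupp.sum_single_index (by simp)
    _ = ∑ I ∈ {n ∈ S | x ∣ n}.powerset with I ≠ ∅, (-1) ^ #I * 2 ^ (#I - 1) := by
        rw [← sum_filter, subsets_multiples]

theorem two_mul_beta_add_one (S : Finset ℕ) (x : ℕ) :
    2 * beta S x + 1 = (-1) ^ #{n ∈ S | x ∣ n} := by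
  rw [beta_eq_sum_subsets_multiples, two_mul_sum_nonempty_subsets_add_one]

theorem even_beta_iff (S : Finset ℕ) (x : ℕ) : Even (beta S x) ↔ Even #{n ∈ S | x ∣ n} := by
  have hbeta := two_mul_beta_add_one S x
  rcases Nat.even_or_odd #{n ∈ S | x ∣ n} with heven | hodd
  · have hzero : beta S x = 0 := by rw [heven.neg_one_pow] at hbeta; lia
    simp [hzero, heven]
  · have hneg : beta S x = -1 := by rw [hodd.neg_one_pow] at hbeta; lia
    simp [hneg, hodd]

theorem filter_symmDiff {α : Type*} [DecidableEq α] (s t : Finset α) (p : α → Prop)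
    [DecidablePred p] : {a ∈ s ∆ t | p a} = {a ∈ s | p a} ∆ {a ∈ t | p a} := by
  ext a
  simp only [mem_filter, mem_symmDiff]
  tauto

theorem even_card_symmDiff_iff {α : Type*} [DecidableEq α] (s t : Finset α) :
    Even #(s ∆ t) ↔ (Even #s ↔ Even #t) := by
  have hcard : #(s ∆ t) = #(s \ t) + #(t \ s) := card_union_of_disjoint disjoint_sdiff_sdiff
  have hs : #(s \ t) + #(s ∩ t) = #s := card_sdiff_add_card_inter s t
  have ht : #(t \ s) + #(s ∩ t) = #t := inter_comm s t ▸ card_sdiff_add_card_inter t s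
  grind

theorem even_beta_sub_beta_iff (S T : Finset ℕ) (x : ℕ) :
    Even (beta S x - beta T x) ↔ Even #{n ∈ S ∆ T | x ∣ n} := by
  rw [Int.even_sub, even_beta_iff, even_beta_iff, filter_symmDiff, even_card_symmDiff_iff]

theorem filter_dvd_eq_singleton_of_isGreatest {D : Finset ℕ} {x : ℕ} (hpos : ∀ n ∈ D, 0 < n)
    (hx : IsGreatest (D : Set ℕ) x) : {n ∈ D | x ∣ n} = {x} := by
  refine eq_singleton_iff_unique_mem.2 ⟨mem_filter.2 ⟨hx.1, dvd_rfl⟩, fun n hn ↦ ?_⟩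
  obtain ⟨hnD, hdvd⟩ := mem_filter.1 hn
  exact le_antisymm (hx.2 hnD) (Nat.le_of_dvd (hpos n hnD) hdvd)

end BetaParity

/-- If `x*` is the largest element of the symmetric difference `S₀ △ S₁` of two
distinct key sets, then `β_{S₀}(x*) − β_{S₁}(x*)` is odd; in particular
`β_{S₀}(x*) ≠ β_{S₁}(x*)`. -/
theorem beta_parity_distinguishes (S₀ S₁ : Finset ℕ)
    (h₀ : ∀ s ∈ S₀, 0 < s) (h₁ : ∀ s ∈ S₁, 0 < s) (hne : S₀ ≠ S₁)
    (xstar : ℕ) (hmem : xstar ∈ (S₀ \ S₁) ∪ (S₁ \ S₀))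
    (hmax : ∀ y ∈ (S₀ \ S₁) ∪ (S₁ \ S₀), y ≤ xstar) :
    Odd (beta S₀ xstar - beta S₁ xstar) ∧ beta S₀ xstar ≠ beta S₁ xstar := by
  have hpos : ∀ n ∈ symmDiff S₀ S₁, 0 < n := fun n hn ↦
    (Finset.mem_symmDiff.1 hn).elim (fun h ↦ h₀ n h.1) (fun h ↦ h₁ n h.1)
  have hodd : Odd (beta S₀ xstar - beta S₁ xstar) := by
    rw [← Int.not_even_iff_odd, even_beta_sub_beta_iff,
      filter_dvd_eq_singleton_of_isGreatest hpos ⟨hmem, hmax⟩, Finset.card_singleton]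
    exact Nat.not_even_one
  exact ⟨hodd, fun heq ↦ by simp [heq] at hodd⟩
end

section
/- (CPA Distinguishability by Dihedral Probes) Let S₀ and S₁ be finite sets of positive integers with S₀ ≠ S₁. Then there exists a positive integer x such that T_{S₀} δ_x ≠ T_{S₁} δ_x; equivalently, the ciphertexts (D_x)·k_{S₀} and (D_x)·k_{S₁} differ for some dihedral probe (D_x). -/
section SymmDiff

variable {ι R : Type*} [DecidableEq ι] [CommMonoid R]

theorem prod_mul_prod_eq_prod_symmDiff {f : ι → R} {A B : Finset ι}
    (hf : ∀ i ∈ A ∩ B, f i * f i = 1) :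
    (∏ i ∈ A, f i) * ∏ i ∈ B, f i = ∏ i ∈ symmDiff A B, f i := by
  have prod_inter : (∏ i ∈ A ∩ B, f i) * ∏ i ∈ B ∩ A, f i = 1 := by
    rw [Finset.inter_comm B A, ← Finset.prod_mul_distrib]
    exact Finset.prod_eq_one hf
  rw [Finset.symmDiff_def, Finset.prod_union disjoint_sdiff_sdiff,
    ← Finset.prod_inter_mul_prod_sdiff A B, ← Finset.prod_inter_mul_prod_sdiff B A,
    mul_mul_mul_comm, prod_inter, one_mul]

end SymmDiff

theorem prod_ite_dvd_zero {α M : Type*} [CommMonoidWithZero α] [NormalizedGCDMonoid α]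
    [DecidableRel (α := α) (· ∣ ·)] [CommMonoidWithZero M] (x : α) (c : M) (I : Finset α) :
    ∏ s ∈ I, (if x ∣ s then c else 0) = if x ∣ I.gcd id then c ^ I.card else 0 := by
  simp only [Finset.prod_ite_zero, Finset.prod_const, Finset.dvd_gcd_iff, id]

/-- Half the mark at `D_x` of `∑ᵢ p(i) (D_i)`: the fixed-point set `(O(2)/D_i)^{D_x}` has two points
if `x ∣ i` and is empty otherwise. Halving turns `(D_i)(D_n) = 2 (D_{gcd(i,n)})` into
multiplicativity for the product `δ_i * δ_n = δ_{gcd(i,n)}`. -/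
noncomputable def halfMark (x : ℕ) : (ℕ →₀ ℤ) →ₗ[ℤ] ℤ :=
  Finsupp.linearCombination ℤ fun i => if x ∣ i then 1 else 0

/-- The mark of the key element `k_S` at `D_x`, factor by factor. -/
def keyMark (S : Finset ℕ) (x : ℕ) : ℤ :=
  ∏ s ∈ S, if x ∣ s then -1 else 1

section HalfMark

variable (x : ℕ)

theorem halfMark_single (i : ℕ) (a : ℤ) :
    halfMark x (Finsupp.single i a) = if x ∣ i then a else 0 := by
  simp [halfMark]

theorem halfMark_eq_sum (p : ℕ →₀ ℤ) :
    halfMark x p = ∑ i ∈ p.support, if x ∣ i then p i else 0 := by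
  simp [halfMark, Finsupp.linearCombination_apply, Finsupp.sum]

theorem halfMark_sum_single_gcd (p q : ℕ →₀ ℤ) :
    halfMark x (∑ i ∈ p.support, ∑ n ∈ q.support, Finsupp.single (i.gcd n) (p i * q n)) =
      halfMark x p * halfMark x q := by
  simp only [map_sum, halfMark_single, halfMark_eq_sum x p, halfMark_eq_sum x q,
    Finset.sum_mul_sum, Nat.dvd_gcd_iff, ite_zero_mul_ite_zero]

theorem halfMark_keyOp_eq_mul (S : Finset ℕ) (p : ℕ →₀ ℤ) :
    halfMark x (keyOp S p) = (1 + 2 * halfMark x (alphaF S)) * halfMark x p := by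
  rw [keyOp, map_add, map_nsmul, halfMark_sum_single_gcd, nsmul_eq_mul]
  push_cast
  ring

theorem two_mul_halfMark_alphaF (S : Finset ℕ) :
    2 * halfMark x (alphaF S) =
      ∑ I ∈ S.powerset with I ≠ ∅, ∏ s ∈ I, if x ∣ s then -2 else 0 := by
  simp only [alphaF, map_sum, halfMark_single, prod_ite_dvd_zero, Finset.mul_sum, mul_ite,
    mul_zero]
  refine Finset.sum_congr rfl fun I hI => ?_
  have card_ne_zero : I.card ≠ 0 := Finset.card_ne_zero.2 <|
    Finset.nonempty_iff_ne_empty.2 (Finset.mem_filter.1 hI).2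
  rw [mul_left_comm, mul_pow_sub_one card_ne_zero, ← mul_pow, neg_one_mul]

theorem one_add_two_mul_halfMark_alphaF (S : Finset ℕ) :
    1 + 2 * halfMark x (alphaF S) = keyMark S x := by
  calc 1 + 2 * halfMark x (alphaF S)
    _ = ∑ I ∈ S.powerset, ∏ s ∈ I, (if x ∣ s then (-2 : ℤ) else 0) := by
      rw [two_mul_halfMark_alphaF, Finset.filter_ne',
        ← Finset.add_sum_erase _ _ (Finset.empty_mem_powerset S), Finset.prod_empty]
    _ = ∏ s ∈ S, (1 + if x ∣ s then -2 else 0) := (Finset.prod_one_add S).symm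
    _ = keyMark S x := Finset.prod_congr rfl fun s _ => by split_ifs <;> norm_num

theorem halfMark_keyOp (S : Finset ℕ) (p : ℕ →₀ ℤ) :
    halfMark x (keyOp S p) = keyMark S x * halfMark x p := by
  rw [halfMark_keyOp_eq_mul, one_add_two_mul_halfMark_alphaF]

end HalfMark

theorem keyMark_mul_keyMark (A B : Finset ℕ) (x : ℕ) :
    keyMark A x * keyMark B x = keyMark (symmDiff A B) x :=
  prod_mul_prod_eq_prod_symmDiff fun s _ => by split_ifs <;> rfl

theorem keyMark_eq_neg_one_of_isGreatest {D : Finset ℕ} {d : ℕ} (hpos : ∀ s ∈ D, 0 < s)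
    (hd : IsGreatest (D : Set ℕ) d) : keyMark D d = -1 := by
  have not_dvd : ∀ s ∈ D, s ≠ d → ¬ d ∣ s := fun s hs hsd hdvd =>
    hsd (le_antisymm (hd.2 hs) (Nat.le_of_dvd (hpos s hs) hdvd))
  rw [keyMark, Finset.prod_eq_single_of_mem d hd.1 fun s hs hsd => if_neg (not_dvd s hs hsd),
    if_pos dvd_rfl]

theorem keyMark_ne_keyMark_of_isGreatest_symmDiff {A B : Finset ℕ} {d : ℕ}
    (hpos : ∀ s ∈ symmDiff A B, 0 < s) (hd : IsGreatest ((symmDiff A B : Finset ℕ) : Set ℕ) d) :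
    keyMark A d ≠ keyMark B d := by
  intro heq
  have mul_self : keyMark B d * keyMark B d = -1 := by
    rw [← keyMark_eq_neg_one_of_isGreatest hpos hd, ← keyMark_mul_keyMark, heq]
  linarith [mul_self_nonneg (keyMark B d)]

theorem keyOp_ne_keyOp_of_keyMark_ne {A B : Finset ℕ} {x : ℕ} {p : ℕ →₀ ℤ}
    (hAB : keyMark A x ≠ keyMark B x) (hp : halfMark x p ≠ 0) : keyOp A p ≠ keyOp B p := by
  intro heq
  have mark_eq := congrArg (halfMark x) heq
  rw [halfMark_keyOp, halfMark_keyOp] at mark_eq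
  exact hAB (mul_right_cancel₀ hp mark_eq)

/-- (CPA Distinguishability by Dihedral Probes) For any two distinct key sets
`S₀ ≠ S₁`, some dihedral probe `(D_x)` yields different ciphertexts:
`(D_x)·k_{S₀} ≠ (D_x)·k_{S₁}`. -/
theorem cpa_distinguishability (S₀ S₁ : Finset ℕ)
    (h₀ : ∀ s ∈ S₀, 0 < s) (h₁ : ∀ s ∈ S₁, 0 < s) (hne : S₀ ≠ S₁) :
    ∃ x : ℕ, 0 < x ∧
      keyOp S₀ (Finsupp.single x 1) ≠ keyOp S₁ (Finsupp.single x 1) := by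
  have hD : (symmDiff S₀ S₁).Nonempty := Finset.symmDiff_nonempty.2 hne
  have hpos : ∀ s ∈ symmDiff S₀ S₁, 0 < s := fun s hs =>
    (Finset.mem_union.1 (Finset.symmDiff_subset_union hs)).elim (h₀ s) (h₁ s)
  have hmax := (symmDiff S₀ S₁).isGreatest_max' hD
  refine ⟨(symmDiff S₀ S₁).max' hD, hpos _ hmax.1, ?_⟩
  apply keyOp_ne_keyOp_of_keyMark_ne (keyMark_ne_keyMark_of_isGreatest_symmDiff hpos hmax)
  simp [halfMark_single]
end
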